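/- Applicative bisimilarity is complete with respect to evaluation-context-based contextual equivalence in λ_S: if t0 ≡E t1 then t0 ≈ t1. -/

import Mathlib

namespace LamS

/-- Terms of the λ-calculus with shift and reset, in de Bruijn representation.
    `lam` and `shift` bind variable 0. -/
inductive Tm : Type
  | var : ℕ → Tm
  | lam : Tm → Tm
  | app : Tm → Tm → Tm
  | shift : Tm → Tm
  | reset : Tm → Tm
  deriving DecidableEq

open Tm

/-- Lift (shift up) free de Bruijn indices `≥ c` by `d`. -/
def liftT (d : ℕ) : ℕ → Tm → Tm
  | c, var n => if n < c then var n else var (n + d)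
  | c, lam t => lam (liftT d (c+1) t)
  | c, app a b => app (liftT d c a) (liftT d c b)
  | c, shift t => shift (liftT d (c+1) t)
  | c, reset t => reset (liftT d c t)

/-- Capture-avoiding substitution `t[j := s]` (de Bruijn). -/
def substT : ℕ → Tm → Tm → Tm
  | j, s, var n => if n = j then liftT j 0 s else if j < n then var (n-1) else var n
  | j, s, lam t => lam (substT (j+1) s t)
  | j, s, app a b => app (substT j s a) (substT j s b)
  | j, s, shift t => shift (substT (j+1) s t)
  | j, s, reset t => reset (substT j s t)

/-- Values are λ-abstractions. -/
def IsValue (t : Tm) : Prop := ∃ b, t = lam b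

/-- All free variables are `< n`. -/
def ClosedUnder : ℕ → Tm → Prop
  | n, var m => m < n
  | n, lam t => ClosedUnder (n+1) t
  | n, app a b => ClosedUnder n a ∧ ClosedUnder n b
  | n, shift t => ClosedUnder (n+1) t
  | n, reset t => ClosedUnder n t

def Closed (t : Tm) : Prop := ClosedUnder 0 t

/-- Pure evaluation contexts, interpreted inside-out:
    `appV b E` is `E[(λ.b) []]` and `appL E t` is `E[[] t]`. -/
inductive PCtx : Type
  | hole : PCtx
  | appV : Tm → PCtx → PCtx
  | appL : PCtx → Tm → PCtx
  deriving DecidableEq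

def PCtx.plug : PCtx → Tm → Tm
  | .hole, t => t
  | .appV b E, t => E.plug (app (lam b) t)
  | .appL E s, t => E.plug (app t s)

def PCtx.liftC (d : ℕ) : ℕ → PCtx → PCtx
  | _, .hole => .hole
  | c, .appV b E => .appV (liftT d (c+1) b) (PCtx.liftC d c E)
  | c, .appL E s => .appL (PCtx.liftC d c E) (liftT d c s)

/-- Composition of pure contexts: `(E.comp E').plug t = E.plug (E'.plug t)`. -/
def PCtx.comp : PCtx → PCtx → PCtx
  | E, .hole => E
  | E, .appV b E' => .appV b (E.comp E')
  | E, .appL E' s => .appL (E.comp E') s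

/-- The captured delimited continuation `λx.⟨E[x]⟩`. -/
def contOf (E : PCtx) : Tm := lam (reset ((PCtx.liftC 1 0 E).plug (var 0)))

/-- Call-by-value evaluation contexts, interpreted inside-out. -/
inductive ECtx : Type
  | hole : ECtx
  | appV : Tm → ECtx → ECtx
  | appL : ECtx → Tm → ECtx
  | resetC : ECtx → ECtx
  deriving DecidableEq

def ECtx.plug : ECtx → Tm → Tm
  | .hole, t => t
  | .appV b F, t => F.plug (app (lam b) t)
  | .appL F s, t => F.plug (app t s)
  | .resetC F, t => F.plug (reset t)

def ClosedECtx : ECtx → Prop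
  | .hole => True
  | .appV b F => ClosedUnder 1 b ∧ ClosedECtx F
  | .appL F s => ClosedECtx F ∧ Closed s
  | .resetC F => ClosedECtx F

/-- One-step reduction of λ_S. -/
inductive Red : Tm → Tm → Prop
  | beta (F : ECtx) (t v : Tm) (hv : IsValue v) :
      Red (F.plug (app (lam t) v)) (F.plug (substT 0 v t))
  | cap (F : ECtx) (E : PCtx) (t : Tm) :
      Red (F.plug (reset (E.plug (shift t)))) (F.plug (reset (substT 0 (contOf E) t)))
  | res (F : ECtx) (v : Tm) (hv : IsValue v) :
      Red (F.plug (reset v)) (F.plug v)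

def RedStar : Tm → Tm → Prop := Relation.ReflTransGen Red

/-- A term is stuck if it is not a value and cannot reduce. -/
def Stuck (t : Tm) : Prop := ¬ IsValue t ∧ ∀ u, ¬ Red t u

/-- Evaluation: reduce to an irreducible term. -/
def Eval (t t' : Tm) : Prop := RedStar t t' ∧ ∀ u, ¬ Red t' u

def IsRedex (r : Tm) : Prop :=
  (∃ t v, IsValue v ∧ r = app (lam t) v) ∨
  (∃ E s, r = reset (PCtx.plug E (shift s))) ∨
  (∃ v, IsValue v ∧ r = reset v)

/-- Labels of the LTS. -/
inductive Label : Type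
  | tau : Label
  | val : Tm → Label
  | ctx : PCtx → Label

/-- The labelled transition system for λ_S. -/
inductive Step : Tm → Label → Tm → Prop
  | beta {t v : Tm} (hv : IsValue v) :
      Step (app (lam t) v) .tau (substT 0 v t)
  | resetVal {v : Tm} (hv : IsValue v) :
      Step (reset v) .tau v
  | appL {t0 t0' t1 : Tm} :
      Step t0 .tau t0' → Step (app t0 t1) .tau (app t0' t1)
  | appR {v t t' : Tm} (hv : IsValue v) :
      Step t .tau t' → Step (app v t) .tau (app v t')
  | resetT {t t' : Tm} :
      Step t .tau t' → Step (reset t) .tau (reset t')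
  | resetCap {t t' : Tm} :
      Step t (.ctx .hole) t' → Step (reset t) .tau t'
  | lamApp {t v : Tm} (hv : IsValue v) :
      Step (lam t) (.val v) (substT 0 v t)
  | shiftCap {t : Tm} (E : PCtx) :
      Step (shift t) (.ctx E) (reset (substT 0 (contOf E) t))
  | capL {t0 t0' t1 : Tm} {E : PCtx} :
      Step t0 (.ctx (.appL E t1)) t0' → Step (app t0 t1) (.ctx E) t0'
  | capR {b t t' : Tm} {E : PCtx} :
      Step t (.ctx (.appV b E)) t' → Step (app (lam b) t) (.ctx E) t'

def TauStar : Tm → Tm → Prop := Relation.ReflTransGen (fun a b => Step a .tau b)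

/-- Weak delay transition: τ-steps, then an `l`-step if `l ≠ τ`. -/
def Weak (t : Tm) (l : Label) (t' : Tm) : Prop :=
  match l with
  | .tau => TauStar t t'
  | _ => ∃ u, TauStar t u ∧ Step u l t'

/-- Applicative simulation. -/
def IsSim (R : Tm → Tm → Prop) : Prop :=
  ∀ ⦃t0 t1⦄, R t0 t1 → ∀ ⦃l t0'⦄, Step t0 l t0' →
    ∃ t1', Weak t1 l t1' ∧ R t0' t1'

def IsBisim (R : Tm → Tm → Prop) : Prop := IsSim R ∧ IsSim (flip R)

/-- Applicative bisimilarity: the largest applicative bisimulation. -/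
def Bisim (t0 t1 : Tm) : Prop := ∃ R, IsBisim R ∧ R t0 t1

/-- Big-step applicative simulation. -/
def IsBigSim (R : Tm → Tm → Prop) : Prop :=
  ∀ ⦃t0 t1⦄, R t0 t1 → ∀ ⦃l t0'⦄, l ≠ Label.tau → Weak t0 l t0' →
    ∃ t1', Weak t1 l t1' ∧ R t0' t1'

def IsBigBisim (R : Tm → Tm → Prop) : Prop := IsBigSim R ∧ IsBigSim (flip R)

/-- Big-step applicative bisimilarity. -/
def BigBisim (t0 t1 : Tm) : Prop := ∃ R, IsBigBisim R ∧ R t0 t1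

/-- General contexts. -/
inductive Ctx : Type
  | hole : Ctx
  | lam : Ctx → Ctx
  | appL : Ctx → Tm → Ctx
  | appR : Tm → Ctx → Ctx
  | shift : Ctx → Ctx
  | reset : Ctx → Ctx

/-- Plugging a term in a general context (free variables may be captured). -/
def Ctx.plug : Ctx → Tm → Tm
  | .hole, t => t
  | .lam C, t => Tm.lam (C.plug t)
  | .appL C s, t => Tm.app (C.plug t) s
  | .appR s C, t => Tm.app s (C.plug t)
  | .shift C, t => Tm.shift (C.plug t)
  | .reset C, t => Tm.reset (C.plug t)

def CtxClosedUnder : ℕ → Ctx → Prop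
  | _, .hole => True
  | n, .lam C => CtxClosedUnder (n+1) C
  | n, .appL C s => CtxClosedUnder n C ∧ ClosedUnder n s
  | n, .appR s C => ClosedUnder n s ∧ CtxClosedUnder n C
  | n, .shift C => CtxClosedUnder (n+1) C
  | n, .reset C => CtxClosedUnder n C

def ClosedCtx (C : Ctx) : Prop := CtxClosedUnder 0 C

def EvalsToValue (t : Tm) : Prop := ∃ v, IsValue v ∧ Eval t v

def EvalsToStuck (t : Tm) : Prop := ∃ s, Stuck s ∧ Eval t s

/-- Contextual equivalence on closed terms. -/
def CtxEquiv (t0 t1 : Tm) : Prop :=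
  ∀ C : Ctx, ClosedCtx C →
    (EvalsToValue (C.plug t0) ↔ EvalsToValue (C.plug t1)) ∧
    (EvalsToStuck (C.plug t0) ↔ EvalsToStuck (C.plug t1))

/-- Contextual equivalence restricted to evaluation contexts. -/
def ECtxEquiv (t0 t1 : Tm) : Prop :=
  ∀ F : ECtx, ClosedECtx F →
    (EvalsToValue (F.plug t0) ↔ EvalsToValue (F.plug t1)) ∧
    (EvalsToStuck (F.plug t0) ↔ EvalsToStuck (F.plug t1))

/-- Lifting a substitution under a binder. -/
def liftSub (σ : ℕ → Tm) : ℕ → Tm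
  | 0 => var 0
  | n+1 => liftT 1 0 (σ n)

/-- Apply a substitution to all free variables of a term. -/
def applySub (σ : ℕ → Tm) : Tm → Tm
  | var n => σ n
  | lam t => lam (applySub (liftSub σ) t)
  | app a b => app (applySub σ a) (applySub σ b)
  | shift t => shift (applySub (liftSub σ) t)
  | reset t => reset (applySub σ t)

/-- A closing substitution maps every variable to a closed value. -/
def ClosingSub (σ : ℕ → Tm) : Prop := ∀ n, IsValue (σ n) ∧ Closed (σ n)

/-- Open extension of a relation on closed terms. -/
def OpenExt (R : Tm → Tm → Prop) (t0 t1 : Tm) : Prop :=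
  ∀ σ, ClosingSub σ → R (applySub σ t0) (applySub σ t1)

/-- Howe's closure of applicative bisimilarity (compatible refinement rules inlined). -/
inductive Howe : Tm → Tm → Prop
  | base {t0 t1} : OpenExt Bisim t0 t1 → Howe t0 t1
  | right {t0 t2 t1} : Howe t0 t2 → OpenExt Bisim t2 t1 → Howe t0 t1
  | compVar (n : ℕ) : Howe (var n) (var n)
  | compLam {t0 t1} : Howe t0 t1 → Howe (lam t0) (lam t1)
  | compApp {a0 a1 b0 b1} : Howe a0 a1 → Howe b0 b1 → Howe (app a0 b0) (app a1 b1)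
  | compShift {t0 t1} : Howe t0 t1 → Howe (shift t0) (shift t1)
  | compReset {t0 t1} : Howe t0 t1 → Howe (reset t0) (reset t1)

/-- Howe's closure restricted to closed terms. -/
def HoweC (t0 t1 : Tm) : Prop := Closed t0 ∧ Closed t1 ∧ Howe t0 t1

/-- Extension of Howe's closure to pure contexts. -/
inductive PCtxHowe : PCtx → PCtx → Prop
  | hole : PCtxHowe .hole .hole
  | appV {b0 b1 E0 E1} : Howe b0 b1 → PCtxHowe E0 E1 → PCtxHowe (.appV b0 E0) (.appV b1 E1)
  | appL {E0 E1 t0 t1} : PCtxHowe E0 E1 → Howe t0 t1 → PCtxHowe (.appL E0 t0) (.appL E1 t1)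

/-- Extension of Howe's closure to labels. -/
def LabHowe : Label → Label → Prop
  | .tau, .tau => True
  | .val v0, .val v1 => Closed v0 ∧ Closed v1 ∧ Howe v0 v1
  | .ctx E0, .ctx E1 => PCtxHowe E0 E1
  | _, _ => False

/-- ω = λx. x x -/
def omegaTm : Tm := lam (app (var 0) (var 0))

/-- Ω = ω ω, the standard diverging term. -/
def OmegaTm : Tm := app omegaTm omegaTm

/-- Every τ-reachable term can do a τ-step: only infinite τ-sequences. -/
def Diverges (t : Tm) : Prop := ∀ u, TauStar t u → ∃ u', Step u .tau u'

/-- No weak non-τ transition. -/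
def NoObs (t : Tm) : Prop := ∀ l t', l ≠ Label.tau → ¬ Weak t l t'

end LamS

/-!
Evaluation-context equivalence `≡E` on closed terms is not itself a bisimulation, because the values
and pure contexts carried by labels may be open. Fix instead a substitution `σ` sending every
variable to the closed self-looping term `Ω`, and relate `t₀` and `t₁` when `t₀[σ] ≡E t₁[σ]`.
Transitions are stable under `σ`, and `σ` creates no `τ`-transitions other than loops, so if `t₁[σ]`
evaluates to a value or to a stuck term, then `t₁` itself reaches a value or a term `E[shift s]`,
which can answer the transition of `t₀`. The results stay related because the transitions labelled
`v` and `E` compute the `τ`-reducts of `t v` and `⟨E[t]⟩`, and after `σ` these place `t[σ]` in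
closed evaluation contexts.
-/

namespace LamS
open Tm Function

theorem liftT_zero (c : ℕ) (t : Tm) : liftT 0 c t = t := by
  induction t generalizing c <;> simp_all [liftT]

theorem liftT_liftT {b c d e : ℕ} (hbc : b ≤ c) (hce : c ≤ b + e) (t : Tm) :
    liftT d c (liftT e b t) = liftT (e + d) b t := by
  induction t generalizing b c <;> grind [liftT]

theorem substT_liftT {c d j : ℕ} (hcj : c ≤ j) (hjd : j ≤ c + d) (s t : Tm) :
    substT j s (liftT (d + 1) c t) = liftT d c t := by
  induction t generalizing c j <;> grind [liftT, substT]

theorem liftSub_iterate (σ : ℕ → Tm) (k n : ℕ) :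
    liftSub^[k] σ n = if n < k then var n else liftT k 0 (σ (n - k)) := by
  induction k generalizing n with
  | zero => simp [liftT_zero]
  | succ k ih =>
    rw [iterate_succ_apply']
    cases n with
    | zero => simp [liftSub]
    | succ n =>
      simp only [liftSub, ih]
      split <;> simp_all [liftT, liftT_liftT]

theorem applySub_liftT (σ : ℕ → Tm) (d c : ℕ) (t : Tm) :
    applySub (liftSub^[c + d] σ) (liftT d c t) = liftT d c (applySub (liftSub^[c] σ) t) := by
  induction t generalizing c with
  | var n =>
    simp only [liftT, applySub, liftSub_iterate]
    by_cases hn : n < c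
    · grind [applySub, liftSub_iterate, liftT]
    · have : liftT d c (liftT c 0 (σ (n - c))) = liftT (c + d) 0 (σ (n - c)) :=
        liftT_liftT (Nat.zero_le c) (by simp) _
      grind [applySub, liftSub_iterate]
  | lam t ih | shift t ih =>
    simpa [liftT, applySub, ← iterate_succ_apply', Nat.add_right_comm] using ih (c + 1)
  | app a b iha ihb => simp only [liftT, applySub, iha, ihb]
  | reset t ih => simp only [liftT, applySub, ih]

theorem applySub_substT (σ : ℕ → Tm) (j : ℕ) (s t : Tm) :
    applySub (liftSub^[j] σ) (substT j s t) =
      substT j (applySub σ s) (applySub (liftSub^[j + 1] σ) t) := by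
  induction t generalizing j with
  | var n =>
    rcases lt_trichotomy n j with hn | rfl | hn
    · grind [applySub, substT, liftSub_iterate]
    · simpa [applySub, substT, liftSub_iterate] using applySub_liftT σ n 0 s
    · have : substT j (applySub σ s) (liftT (j + 1) 0 (σ (n - (j + 1)))) =
          liftT j 0 (σ (n - (j + 1))) := substT_liftT (Nat.zero_le j) (by simp) _ _
      grind [applySub, substT, liftSub_iterate]
  | lam t ih | shift t ih => simp only [substT, applySub, ← iterate_succ_apply', ih]
  | app a b iha ihb => simp only [substT, applySub, iha, ihb]
  | reset t ih => simp only [substT, applySub, ih]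

theorem applySub_substT_zero (σ : ℕ → Tm) (s t : Tm) :
    applySub σ (substT 0 s t) = substT 0 (applySub σ s) (applySub (liftSub σ) t) :=
  applySub_substT σ 0 s t

theorem ClosedUnder.liftT {k : ℕ} {t : Tm} (ht : ClosedUnder k t) (d c : ℕ) :
    ClosedUnder (k + d) (liftT d c t) := by
  induction t generalizing k c <;> grind [LamS.liftT, ClosedUnder]

theorem closedUnder_liftSub {k : ℕ} {σ : ℕ → Tm} (hσ : ∀ n, ClosedUnder k (σ n)) :
    ∀ n, ClosedUnder (k + 1) (liftSub σ n)
  | 0 => Nat.succ_pos k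
  | n + 1 => (hσ n).liftT 1 0

theorem closedUnder_applySub {k : ℕ} {σ : ℕ → Tm} (hσ : ∀ n, ClosedUnder k (σ n)) (t : Tm) :
    ClosedUnder k (applySub σ t) := by
  induction t generalizing k σ with
  | var n => exact hσ n
  | lam _ ih | shift _ ih => exact ih (closedUnder_liftSub hσ)
  | app _ _ iha ihb => exact ⟨iha hσ, ihb hσ⟩
  | reset _ ih => exact ih hσ

theorem liftSub_eq_var {k : ℕ} {σ : ℕ → Tm} (hσ : ∀ n < k, σ n = var n) :
    ∀ n < k + 1, liftSub σ n = var n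
  | 0, _ => rfl
  | n + 1, hn => by simp [liftSub, hσ n (by omega), liftT]

theorem applySub_eq_self {k : ℕ} {σ : ℕ → Tm} {t : Tm} (ht : ClosedUnder k t)
    (hσ : ∀ n < k, σ n = var n) : applySub σ t = t := by
  induction t generalizing k σ with
  | var n => exact hσ n ht
  | lam t ih | shift t ih => simp only [applySub, ih ht (liftSub_eq_var hσ)]
  | app a b iha ihb => simp only [applySub, iha ht.1 hσ, ihb ht.2 hσ]
  | reset t ih => rw [applySub, ih ht hσ]

theorem IsValue.applySub {v : Tm} (hv : IsValue v) (σ : ℕ → Tm) : IsValue (applySub σ v) := by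
  obtain ⟨b, rfl⟩ := hv
  exact ⟨_, rfl⟩

/-- The action of a substitution on pure contexts, `E ↦ E[σ]`. -/
def PCtx.applySub (σ : ℕ → Tm) : PCtx → PCtx
  | .hole => .hole
  | .appV b E => .appV (LamS.applySub (liftSub σ) b) (E.applySub σ)
  | .appL E s => .appL (E.applySub σ) (LamS.applySub σ s)

/-- The action of a substitution on transition labels. -/
def Label.applySub (σ : ℕ → Tm) : Label → Label
  | .tau => .tau
  | .val v => .val (LamS.applySub σ v)
  | .ctx E => .ctx (E.applySub σ)

theorem PCtx.applySub_plug (σ : ℕ → Tm) (E : PCtx) (t : Tm) :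
    LamS.applySub σ (E.plug t) = (E.applySub σ).plug (LamS.applySub σ t) := by
  induction E generalizing t with
  | hole => rfl
  | appV _ _ ih | appL _ _ ih => exact ih _

theorem PCtx.applySub_liftC (σ : ℕ → Tm) (E : PCtx) :
    (E.liftC 1 0).applySub (liftSub σ) = (E.applySub σ).liftC 1 0 := by
  induction E with
  | hole => rfl
  | appV b E ih => exact congrArg₂ PCtx.appV (applySub_liftT σ 1 1 b) ih
  | appL E s ih => exact congrArg₂ PCtx.appL ih (applySub_liftT σ 1 0 s)

theorem applySub_contOf (σ : ℕ → Tm) (E : PCtx) :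
    applySub σ (contOf E) = contOf (E.applySub σ) := by
  simp only [contOf, applySub, PCtx.applySub_plug, PCtx.applySub_liftC, liftSub]

theorem Step.applySub {t t' : Tm} {l : Label} (h : Step t l t') (σ : ℕ → Tm) :
    Step (applySub σ t) (l.applySub σ) (applySub σ t') := by
  induction h with
  | beta hv => rw [applySub_substT_zero]; exact .beta (hv.applySub σ)
  | resetVal hv => exact .resetVal (hv.applySub σ)
  | appL _ ih => exact .appL ih
  | appR hv _ ih => exact .appR (hv.applySub σ) ih
  | resetT _ ih => exact .resetT ih
  | resetCap _ ih => exact .resetCap ih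
  | lamApp hv => rw [applySub_substT_zero]; exact .lamApp (hv.applySub σ)
  | shiftCap E =>
    simp only [LamS.applySub, applySub_substT_zero, applySub_contOf]
    exact .shiftCap _
  | capL _ ih => exact .capL ih
  | capR _ ih => exact .capR ih

theorem isValue_lam (b : Tm) : IsValue (lam b) := ⟨b, rfl⟩

theorem IsValue.not_step_tau {v t : Tm} (hv : IsValue v) : ¬ Step v .tau t := by
  obtain ⟨b, rfl⟩ := hv
  rintro ⟨⟩

theorem IsValue.not_step_ctx {v t : Tm} {E : PCtx} (hv : IsValue v) : ¬ Step v (.ctx E) t := by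
  obtain ⟨b, rfl⟩ := hv
  rintro ⟨⟩

theorem Step.not_ctx_of_tau {t u u' : Tm} {E : PCtx} (h : Step t .tau u) :
    ¬ Step t (.ctx E) u' := by
  intro h'
  induction t generalizing u u' E with
  | var | lam | shift => cases h
  | app a b iha ihb =>
    cases h <;> cases h' <;> grind [IsValue.not_step_tau, IsValue.not_step_ctx, isValue_lam]
  | reset => cases h'

theorem Step.unique {t u u' : Tm} {l : Label} (h : Step t l u) (h' : Step t l u') : u = u' := by
  induction t generalizing l u u' with
  | var => cases h
  | lam | shift => cases h; cases h'; rfl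
  | app a b iha ihb =>
    cases h <;> cases h' <;>
      grind [IsValue.not_step_tau, IsValue.not_step_ctx, isValue_lam]
  | reset a ih =>
    cases h <;> cases h' <;>
      grind [IsValue.not_step_tau, IsValue.not_step_ctx, not_ctx_of_tau]

theorem PCtx.hole_comp (E : PCtx) : PCtx.hole.comp E = E := by
  induction E <;> simp_all only [comp]

theorem PCtx.comp_assoc (E₁ E₂ E₃ : PCtx) : (E₁.comp E₂).comp E₃ = E₁.comp (E₂.comp E₃) := by
  induction E₃ <;> simp_all only [comp]

theorem PCtx.plug_comp (E E' : PCtx) (t : Tm) : (E.comp E').plug t = E.plug (E'.plug t) := by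
  induction E' generalizing t <;> simp_all only [comp, plug]

theorem Step.plug_ctx {E E' : PCtx} {t t' : Tm} (h : Step t (.ctx (E.comp E')) t') :
    Step (E'.plug t) (.ctx E) t' := by
  induction E' generalizing t with
  | hole => exact h
  | appV _ _ ih => exact ih (.capR h)
  | appL _ _ ih => exact ih (.capL h)

theorem step_plug_shift (E E' : PCtx) (s : Tm) :
    Step (E'.plug (shift s)) (.ctx E) (reset (substT 0 (contOf (E.comp E')) s)) :=
  .plug_ctx (.shiftCap _)

theorem Step.reset_plug {E : PCtx} {t t' : Tm} (h : Step t (.ctx E) t') :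
    Step (reset (E.plug t)) .tau t' :=
  .resetCap (.plug_ctx (by rwa [PCtx.hole_comp]))

theorem Step.eq_plug_shift {t t' : Tm} {E : PCtx} (h : Step t (.ctx E) t') :
    ∃ E' s, t = PCtx.plug E' (shift s) ∧ t' = reset (substT 0 (contOf (E.comp E')) s) := by
  induction t generalizing E with
  | var | lam | reset => cases h
  | shift s => cases h; exact ⟨.hole, s, rfl, rfl⟩
  | app a b iha ihb =>
    cases h with
    | capL h =>
      obtain ⟨E', s, rfl, rfl⟩ := iha h
      exact ⟨(PCtx.appL .hole b).comp E', s, by simp only [PCtx.plug_comp, PCtx.plug],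
        by simp only [← PCtx.comp_assoc, PCtx.comp]⟩
    | @capR c _ _ _ h =>
      obtain ⟨E', s, rfl, rfl⟩ := ihb h
      exact ⟨(PCtx.appV c .hole).comp E', s, by simp only [PCtx.plug_comp, PCtx.plug],
        by simp only [← PCtx.comp_assoc, PCtx.comp]⟩

/-- Composition of evaluation contexts, `F[F']`. -/
def ECtx.comp : ECtx → ECtx → ECtx
  | F, .hole => F
  | F, .appV b F' => .appV b (F.comp F')
  | F, .appL F' s => .appL (F.comp F') s
  | F, .resetC F' => .resetC (F.comp F')

theorem ECtx.plug_comp (F F' : ECtx) (t : Tm) : (F.comp F').plug t = F.plug (F'.plug t) := by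
  induction F' generalizing t <;> simp_all only [comp, plug]

theorem Red.plug {t t' : Tm} (h : Red t t') (F : ECtx) : Red (F.plug t) (F.plug t') := by
  cases h <;> simp only [← ECtx.plug_comp]
  case beta hv => exact .beta _ _ _ hv
  case cap => exact .cap _ _ _
  case res hv => exact .res _ _ hv

theorem Step.plug {t t' : Tm} (h : Step t .tau t') (F : ECtx) :
    Step (F.plug t) .tau (F.plug t') := by
  induction F generalizing t t' with
  | hole => exact h
  | appV b _ ih => exact ih (.appR (isValue_lam b) h)
  | appL _ _ ih => exact ih (.appL h)
  | resetC _ ih => exact ih (.resetT h)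

theorem Step.red {t t' : Tm} (h : Step t .tau t') : Red t t' := by
  induction t generalizing t' with
  | var | lam | shift => cases h
  | app a b iha ihb =>
    cases h with
    | beta hv => exact .beta .hole _ _ hv
    | appL h => exact (iha h).plug (.appL .hole b)
    | appR hv h =>
      obtain ⟨c, rfl⟩ := hv
      exact (ihb h).plug (.appV c .hole)
  | reset a ih =>
    cases h with
    | resetVal hv => exact .res .hole _ hv
    | resetT h => exact (ih h).plug (.resetC .hole)
    | resetCap h =>
      obtain ⟨E, s, rfl, rfl⟩ := h.eq_plug_shift
      rw [PCtx.hole_comp]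
      exact .cap .hole E s

theorem red_iff_step_tau {t t' : Tm} : Red t t' ↔ Step t .tau t' := by
  refine ⟨fun h => ?_, Step.red⟩
  cases h with
  | beta F _ _ hv => exact (Step.beta hv).plug F
  | cap F E => exact (Step.shiftCap E).reset_plug.plug F
  | res F _ hv => exact (Step.resetVal hv).plug F

theorem redStar_iff_tauStar {t t' : Tm} : RedStar t t' ↔ TauStar t t' := by
  simp only [RedStar, TauStar, ← red_iff_step_tau]

theorem Red.unique {t u u' : Tm} (h : Red t u) (h' : Red t u') : u = u' :=
  (red_iff_step_tau.1 h).unique (red_iff_step_tau.1 h')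

theorem Red.eval_iff {t t' u : Tm} (h : Red t t') : Eval t u ↔ Eval t' u := by
  refine and_congr_left fun hu => ⟨fun htu => ?_, .head h⟩
  rcases htu.cases_head with rfl | ⟨c, htc, hcu⟩
  · exact absurd h (hu t')
  · rwa [h.unique htc]

theorem IsValue.evalsToValue {v : Tm} (hv : IsValue v) : EvalsToValue v :=
  ⟨v, hv, .refl, fun _ h => hv.not_step_tau (red_iff_step_tau.1 h)⟩

theorem Step.evalsToStuck {t t' : Tm} {E : PCtx} (h : Step t (.ctx E) t') : EvalsToStuck t :=
  have irreducible : ∀ u, ¬ Red t u := fun _ hu => (red_iff_step_tau.1 hu).not_ctx_of_tau h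
  ⟨t, ⟨fun ht => ht.not_step_ctx h, irreducible⟩, .refl, irreducible⟩

namespace ECtxEquiv

variable {a b c : Tm}

theorem refl (a : Tm) : ECtxEquiv a a := fun _ _ => ⟨Iff.rfl, Iff.rfl⟩

theorem symm (h : ECtxEquiv a b) : ECtxEquiv b a := fun F hF => ⟨(h F hF).1.symm, (h F hF).2.symm⟩

theorem trans (hab : ECtxEquiv a b) (hbc : ECtxEquiv b c) : ECtxEquiv a c :=
  fun F hF => ⟨(hab F hF).1.trans (hbc F hF).1, (hab F hF).2.trans (hbc F hF).2⟩

instance : Trans ECtxEquiv ECtxEquiv ECtxEquiv := ⟨trans⟩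

theorem of_step (h : Step a .tau b) : ECtxEquiv a b := fun F _ => by
  simp only [EvalsToValue, EvalsToStuck, (h.red.plug F).eval_iff, and_self]

theorem app (h : ECtxEquiv a b) {s : Tm} (hs : Closed s) : ECtxEquiv (Tm.app a s) (Tm.app b s) :=
  fun F hF => h (.appL F s) ⟨hF, hs⟩

theorem lam_app (h : ECtxEquiv a b) {s : Tm} (hs : ClosedUnder 1 s) :
    ECtxEquiv (Tm.app (lam s) a) (Tm.app (lam s) b) :=
  fun F hF => h (.appV s F) ⟨hs, hF⟩

theorem reset (h : ECtxEquiv a b) : ECtxEquiv (Tm.reset a) (Tm.reset b) :=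
  fun F hF => h (.resetC F) hF

end ECtxEquiv

section Closing

variable {σ : ℕ → Tm}

theorem ECtxEquiv.plug_applySub (hσ : ∀ n, Closed (σ n)) (E : PCtx) {a b : Tm} (h : ECtxEquiv a b) :
    ECtxEquiv ((E.applySub σ).plug a) ((E.applySub σ).plug b) := by
  induction E generalizing a b with
  | hole => exact h
  | appV s _ ih => exact ih (h.lam_app (closedUnder_applySub hσ (lam s)))
  | appL _ s ih => exact ih (h.app (closedUnder_applySub hσ s))

theorem ECtxEquiv.of_tauStar {t t' : Tm} (h : TauStar t t') : ECtxEquiv t t' := by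
  induction h with
  | refl => exact .refl t
  | tail _ hstep ih => exact ih.trans (of_step hstep)

theorem TauStar.applySub {t t' : Tm} (h : TauStar t t') (σ : ℕ → Tm) :
    TauStar (LamS.applySub σ t) (LamS.applySub σ t') :=
  Relation.ReflTransGen.lift (LamS.applySub σ) (fun _ _ hstep => hstep.applySub σ) _ _ h

/-- The last alternative covers free variables in evaluation position: their images under `σ`
loop, so instantiating them cannot create new behaviour. -/
theorem progress (hσ : ∀ n, Step (σ n) .tau (σ n)) (t : Tm) :
    IsValue t ∨ (∃ E s, t = PCtx.plug E (shift s)) ∨ (∃ t', Step t .tau t') ∨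
      Step (applySub σ t) .tau (applySub σ t) := by
  induction t with
  | var n => exact .inr (.inr (.inr (hσ n)))
  | lam b => exact .inl (isValue_lam b)
  | shift s => exact .inr (.inl ⟨.hole, s, rfl⟩)
  | app a b iha ihb =>
    refine .inr ?_
    rcases iha with ⟨c, rfl⟩ | ⟨E, s, rfl⟩ | ⟨a', ha⟩ | ha
    · rcases ihb with hb | ⟨E, s, rfl⟩ | ⟨b', hb⟩ | hb
      · exact .inr (.inl ⟨_, .beta hb⟩)
      · exact .inl ⟨(PCtx.appV c .hole).comp E, s, by simp only [PCtx.plug_comp, PCtx.plug]⟩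
      · exact .inr (.inl ⟨_, .appR (isValue_lam c) hb⟩)
      · exact .inr (.inr (.appR (isValue_lam _) hb))
    · exact .inl ⟨(PCtx.appL .hole b).comp E, s, by simp only [PCtx.plug_comp, PCtx.plug]⟩
    · exact .inr (.inl ⟨_, .appL ha⟩)
    · exact .inr (.inr (.appL ha))
  | reset a ih =>
    refine .inr (.inr ?_)
    rcases ih with ha | ⟨E, s, rfl⟩ | ⟨a', ha⟩ | ha
    · exact .inl ⟨a, .resetVal ha⟩
    · exact .inl ⟨_, (Step.shiftCap E).reset_plug⟩
    · exact .inl ⟨_, .resetT ha⟩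
    · exact .inr (.resetT ha)

theorem exists_step_of_step_applySub (hσ : ∀ n, Step (σ n) .tau (σ n)) {t u : Tm}
    (h : Step (applySub σ t) .tau u) :
    (∃ t', Step t .tau t' ∧ applySub σ t' = u) ∨ u = applySub σ t := by
  rcases progress hσ t with ht | ⟨E, s, rfl⟩ | ⟨t', ht⟩ | ht
  · exact absurd h (ht.applySub σ).not_step_tau
  · exact absurd ((step_plug_shift .hole E s).applySub σ) h.not_ctx_of_tau
  · exact .inl ⟨t', ht, (ht.applySub σ).unique h⟩
  · exact .inr (h.unique ht)

theorem exists_tauStar_of_tauStar_applySub (hσ : ∀ n, Step (σ n) .tau (σ n)) {t u : Tm}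
    (h : TauStar (applySub σ t) u) : ∃ t', TauStar t t' ∧ applySub σ t' = u := by
  induction h with
  | refl => exact ⟨t, .refl, rfl⟩
  | tail _ hstep ih =>
    obtain ⟨t', ht, rfl⟩ := ih
    rcases exists_step_of_step_applySub hσ hstep with ⟨t'', ht', rfl⟩ | rfl
    · exact ⟨t'', ht.tail ht', rfl⟩
    · exact ⟨t', ht, rfl⟩

theorem isValue_or_eq_plug_shift_of_not_red_applySub (hσ : ∀ n, Step (σ n) .tau (σ n)) {t : Tm}
    (ht : ∀ u, ¬ Red (applySub σ t) u) : IsValue t ∨ ∃ E s, t = PCtx.plug E (shift s) := by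
  rcases progress hσ t with hv | hs | ⟨t', h⟩ | h
  · exact .inl hv
  · exact .inr hs
  · exact absurd (h.applySub σ).red (ht _)
  · exact absurd h.red (ht _)

theorem exists_tauStar_of_eval_applySub (hσ : ∀ n, Step (σ n) .tau (σ n)) {t u : Tm}
    (h : Eval (applySub σ t) u) :
    ∃ t', TauStar t t' ∧ applySub σ t' = u ∧ (IsValue t' ∨ ∃ E s, t' = PCtx.plug E (shift s)) := by
  obtain ⟨t', ht, rfl⟩ := exists_tauStar_of_tauStar_applySub hσ (redStar_iff_tauStar.1 h.1)
  exact ⟨t', ht, rfl, isValue_or_eq_plug_shift_of_not_red_applySub hσ h.2⟩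

theorem exists_tauStar_lam_of_evalsToValue_applySub (hσ : ∀ n, Step (σ n) .tau (σ n)) {t : Tm}
    (h : EvalsToValue (applySub σ t)) : ∃ b, TauStar t (lam b) := by
  obtain ⟨_, hv, heval⟩ := h
  obtain ⟨_, ht, rfl, ⟨b, rfl⟩ | ⟨E, s, rfl⟩⟩ := exists_tauStar_of_eval_applySub hσ heval
  · exact ⟨b, ht⟩
  · exact absurd ((step_plug_shift .hole E s).applySub σ) hv.not_step_ctx

theorem exists_tauStar_plug_shift_of_evalsToStuck_applySub (hσ : ∀ n, Step (σ n) .tau (σ n))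
    {t : Tm} (h : EvalsToStuck (applySub σ t)) : ∃ E s, TauStar t (PCtx.plug E (shift s)) := by
  obtain ⟨_, hstuck, heval⟩ := h
  obtain ⟨_, ht, rfl, hv | ⟨E, s, rfl⟩⟩ := exists_tauStar_of_eval_applySub hσ heval
  · exact absurd (hv.applySub σ) hstuck.1
  · exact ⟨E, s, ht⟩

theorem ECtxEquiv.substT_of_lam (hσ : ∀ n, Closed (σ n)) {b₀ b₁ v : Tm} (hv : IsValue v)
    (h : ECtxEquiv (applySub σ (lam b₀)) (applySub σ (lam b₁))) :
    ECtxEquiv (applySub σ (substT 0 v b₀)) (applySub σ (substT 0 v b₁)) :=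
  calc
    ECtxEquiv (applySub σ (substT 0 v b₀)) (applySub σ (Tm.app (lam b₀) v)) :=
      (of_step ((Step.beta hv).applySub σ)).symm
    ECtxEquiv _ (applySub σ (Tm.app (lam b₁) v)) := h.app (closedUnder_applySub hσ v)
    ECtxEquiv _ (applySub σ (substT 0 v b₁)) := of_step ((Step.beta hv).applySub σ)

theorem ECtxEquiv.of_step_ctx (hσ : ∀ n, Closed (σ n)) {t₀ t₁ t₀' t₁' : Tm} {E : PCtx}
    (h : ECtxEquiv (applySub σ t₀) (applySub σ t₁)) (h₀ : Step t₀ (.ctx E) t₀')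
    (h₁ : Step t₁ (.ctx E) t₁') : ECtxEquiv (applySub σ t₀') (applySub σ t₁') :=
  calc
    ECtxEquiv (applySub σ t₀') (Tm.reset ((E.applySub σ).plug (applySub σ t₀))) :=
      (of_step (h₀.applySub σ).reset_plug).symm
    ECtxEquiv _ (Tm.reset ((E.applySub σ).plug (applySub σ t₁))) := (h.plug_applySub hσ E).reset
    ECtxEquiv _ (applySub σ t₁') := of_step (h₁.applySub σ).reset_plug

theorem isSim_eCtxEquiv_on_applySub (hclosed : ∀ n, Closed (σ n))
    (hloop : ∀ n, Step (σ n) .tau (σ n)) : IsSim (ECtxEquiv on applySub σ) := by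
  intro t₀ t₁ (h : ECtxEquiv (applySub σ t₀) (applySub σ t₁)) l t₀' hstep
  cases l with
  | tau => exact ⟨t₁, .refl, (ECtxEquiv.of_step (hstep.applySub σ)).symm.trans h⟩
  | val v =>
    obtain ⟨b₀, hv, rfl, rfl⟩ : ∃ b₀, IsValue v ∧ t₀ = lam b₀ ∧ t₀' = substT 0 v b₀ := by
      cases hstep with | lamApp hv => exact ⟨_, hv, rfl, rfl⟩
    obtain ⟨b₁, ht₁⟩ := exists_tauStar_lam_of_evalsToValue_applySub hloop
      ((h .hole trivial).1.1 ((isValue_lam b₀).applySub σ).evalsToValue)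
    have hlam := h.trans (.of_tauStar (ht₁.applySub σ))
    exact ⟨substT 0 v b₁, ⟨_, ht₁, .lamApp hv⟩, hlam.substT_of_lam hclosed hv⟩
  | ctx E =>
    obtain ⟨E₁, s, ht₁⟩ := exists_tauStar_plug_shift_of_evalsToStuck_applySub hloop
      ((h .hole trivial).2.1 (hstep.applySub σ).evalsToStuck)
    have hshift := h.trans (.of_tauStar (ht₁.applySub σ))
    have hstep₁ := step_plug_shift E E₁ s
    exact ⟨_, ⟨_, ht₁, hstep₁⟩, hshift.of_step_ctx hclosed hstep hstep₁⟩

end Closing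

instance : Std.Symm ECtxEquiv := ⟨fun _ _ => ECtxEquiv.symm⟩

theorem IsSim.isBisim {R : Tm → Tm → Prop} [Std.Symm R] (hR : IsSim R) : IsBisim R :=
  ⟨hR, by rwa [Std.Symm.flip_eq]⟩

theorem closed_OmegaTm : Closed OmegaTm := by
  simp [Closed, OmegaTm, omegaTm, ClosedUnder]

theorem step_OmegaTm : Step OmegaTm .tau OmegaTm :=
  .beta (t := Tm.app (var 0) (var 0)) (isValue_lam _)

end LamS

open LamS LamS.Tm in
/-- completeness of applicative bisimilarity w.r.t.
    evaluation-context-based contextual equivalence. -/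
theorem bisim_complete :
    ∀ t0 t1 : Tm, Closed t0 → Closed t1 → ECtxEquiv t0 t1 → Bisim t0 t1 := by
  intro t0 t1 h0 h1 h
  let σ : ℕ → Tm := fun _ => OmegaTm
  have hsim : IsSim (Function.onFun ECtxEquiv (applySub σ)) :=
    isSim_eCtxEquiv_on_applySub (fun _ => closed_OmegaTm) (fun _ => step_OmegaTm)
  have closed_eq {t : Tm} (ht : Closed t) : applySub σ t = t := applySub_eq_self ht (by simp)
  refine ⟨_, hsim.isBisim, ?_⟩
  rwa [Function.onFun, closed_eq h0, closed_eq h1]
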